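/- If f, g : ℝ^N → [0, ∞] are Borel measurable and φ is a Young function, then f⊼g is Lebesgue measurable and ‖f⊼g‖_φ ≤ 2^{N−1} ( ‖f̂‖_φ + ‖ĝ‖_φ ). -/

import Mathlib

open MeasureTheory Filter Set
open scoped ENNReal NNReal Pointwise

noncomputable section

/-- `ℝ^N` with the Euclidean structure and Lebesgue measure. -/
abbrev ES (N : ℕ) := EuclideanSpace ℝ (Fin N)

variable {N : ℕ}

/-- The operation `(f ⊼ g)(x) = sup_y min (f (x - y)) (g y)` for extended-real valued
functions. -/
def supMinE (f g : ES N → EReal) (x : ES N) : EReal := ⨆ y, min (f (x - y)) (g y)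

/-- The operation `(f ⊻ g)(x) = inf_y max (f (x - y)) (g y)` for extended-real valued
functions. -/
def infMaxE (f g : ES N → EReal) (x : ES N) : EReal := ⨅ y, max (f (x - y)) (g y)

/-- The infimal convolution `(f □ g)(x) = inf_y (f (x - y) + g y)`. -/
def infConvE (f g : ES N → EReal) (x : ES N) : EReal := ⨅ y, (f (x - y) + g y)

/-- The operation `(f ⊼ g)(x) = sup_y min (f (x - y)) (g y)` for `[0,∞]`-valued functions. -/
def supMin (f g : ES N → ℝ≥0∞) (x : ES N) : ℝ≥0∞ := ⨆ y, min (f (x - y)) (g y)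

/-- A Young function: a nonconstant, nondecreasing, convex, left-continuous
`φ : [0,∞] → [0,∞]` with `φ 0 = 0`. -/
structure IsYoungFunction (φ : ℝ≥0∞ → ℝ≥0∞) : Prop where
  nonconstant : ∃ x y, φ x ≠ φ y
  map_zero : φ 0 = 0
  mono : Monotone φ
  convex : ∀ ⦃a b x y : ℝ≥0∞⦄, a + b = 1 → φ (a * x + b * y) ≤ a * φ x + b * φ y
  left_continuous : ∀ x, ContinuousWithinAt φ (Set.Iio x) x

/-- The Luxemburg norm `‖h‖_φ = inf {r > 0 | ∫ φ (r⁻¹ |h|) ≤ 1}` (`= ∞` if no such `r`),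
for a nonnegative function `h`. -/
def luxNorm (φ : ℝ≥0∞ → ℝ≥0∞) (h : ES N → ℝ≥0∞) : ℝ≥0∞ :=
  sInf {r : ℝ≥0∞ | 0 < r ∧ ∫⁻ x, φ (r⁻¹ * h x) ≤ 1}

/-- The nonnegative part of an extended real, as an element of `[0,∞]`. -/
def toENN (a : EReal) : ℝ≥0∞ := if a = ⊤ then ⊤ else ENNReal.ofReal a.toReal

/-- The reciprocal `1/a ∈ [0,∞]` of an extended real (intended for `a ≥ 0`), with the
conventions `1/0 = ∞` and `1/∞ = 0`. -/
def eInv (a : EReal) : ℝ≥0∞ := (toENN a)⁻¹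

/-- The enclosing radius of a set `X ⊆ ℝ^N`: the infimum of the radii of closed balls
containing `X` (`0` for `X = ∅`, `∞` if `X` is unbounded). -/
def encRadius (X : Set (ES N)) : ℝ≥0∞ := sInf {r : ℝ≥0∞ | ∃ c : ES N, ∀ x ∈ X, edist x c ≤ r}

/-- The transform `f̂(x) = γ_f^+(|x|)` where `γ_f^+(t) = inf {ξ | ρ_f^+(ξ) ≤ t}` and
`ρ_f^+(ξ)` is the enclosing radius of the upper level set `{f > ξ}`. -/
def hatE (f : ES N → EReal) (x : ES N) : EReal :=
  sInf {ξ : EReal | encRadius {y | ξ < f y} ≤ (‖x‖₊ : ℝ≥0∞)}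

/-- The lower transform `f̌ = -((-f)^)`. -/
def checkE (f : ES N → EReal) (x : ES N) : EReal := - hatE (fun y => - f y) x

/-- The transform `f̂` for `[0,∞]`-valued functions. -/
def hatT (f : ES N → ℝ≥0∞) (x : ES N) : ℝ≥0∞ :=
  sInf {ξ : ℝ≥0∞ | encRadius {y | ξ < f y} ≤ (‖x‖₊ : ℝ≥0∞)}

/-- The lower transform `f̌(x) = γ_f^-(|x|)`, `γ_f^-(t) = sup {ξ | ρ({f < ξ}) ≤ t}`,
for `[0,∞]`-valued functions. -/
def checkT (f : ES N → ℝ≥0∞) (x : ES N) : ℝ≥0∞ :=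
  sSup {ξ : ℝ≥0∞ | encRadius {y | f y < ξ} ≤ (‖x‖₊ : ℝ≥0∞)}

/-- The `L^p` "norm" (`p ∈ [1,∞]`, essential supremum when `p = ∞`) of a `[0,∞]`-valued
function. -/
def pNorm (p : ℝ≥0∞) (h : ES N → ℝ≥0∞) : ℝ≥0∞ :=
  if p = ∞ then essSup h volume else (∫⁻ x, h x ^ p.toReal) ^ (1 / p.toReal)

/-!
The superlevel sets of `f ⊼ g` are the Minkowski sums of those of `f` and `g`. A sum of Borel sets
need not be Borel, but it is analytic, and analytic sets are null-measurable.

The enclosing radius is subadditive under Minkowski sums, and a set of enclosing radius `r` has at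
most the volume of a ball of radius `r`, so `(a + b) ^ N ≤ 2 ^ (N - 1) * (a ^ N + b ^ N)` bounds the
volume of `{f ⊼ g > ξ}` by `2 ^ (N - 1)` times the sum of the volumes of `{f̂ > ξ}` and `{ĝ > ξ}`.
The layer cake formula turns this into the bound
`∫ φ (c (f ⊼ g)) ≤ 2 ^ (N - 1) * (∫ φ (c f̂) + ∫ φ (c ĝ))` for every `c`. Convexity and
`φ 0 = 0` give `φ (a x) ≤ a φ x` for `a ≤ 1`, which moves the factor `2 ^ (N - 1)` out of the
integral and onto the norm.
-/

open Metric Topology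

section AnalyticSet

theorem analyticSet_add {α : Type*} [TopologicalSpace α] [Add α] [ContinuousAdd α]
    {s t : Set α} (hs : AnalyticSet s) (ht : AnalyticSet t) : AnalyticSet (s + t) := by
  obtain ⟨β, _, _, f, hf, rfl⟩ := analyticSet_iff_exists_polishSpace_range.1 hs
  obtain ⟨γ, _, _, g, hg, rfl⟩ := analyticSet_iff_exists_polishSpace_range.1 ht
  have hadd : range f + range g = range fun p : β × γ => f p.1 + g p.2 :=
    image2_range _ _ _
  rw [hadd]
  exact analyticSet_range_of_polishSpace (by fun_prop)

theorem isCompact_Iic_pi_nat (n : ℕ → ℕ) : IsCompact (Iic n) := by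
  simpa only [Icc_bot] using isCompact_Icc (a := (⊥ : ℕ → ℕ)) (b := n)

theorem exists_pi_Iio_Iic_subset_of_isOpen {n : ℕ → ℕ} {V : Set (ℕ → ℕ)} (hV : IsOpen V)
    (hnV : Iic n ⊆ V) : ∃ m, (Iio m).pi (fun i => Iic (n i)) ⊆ V := by
  let _ := PiNat.metricSpaceNatNat
  obtain ⟨δ, hδ, hδV⟩ := (isCompact_Iic_pi_nat n).exists_thickening_subset_open hV hnV
  obtain ⟨m, hm⟩ := exists_pow_lt_of_lt_one hδ (one_half_lt_one (α := ℝ))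
  refine ⟨m, fun x hx => hδV ?_⟩
  have hcyl : x ∈ PiNat.cylinder (x ⊓ n) m := fun i hi => (inf_eq_left.2 (hx i hi)).symm
  exact Metric.mem_thickening_iff.2
    ⟨x ⊓ n, mem_Iic.2 inf_le_right, (PiNat.mem_cylinder_iff_dist_le.1 hcyl).trans_lt hm⟩

variable {α : Type*} [MeasurableSpace α] {μ : Measure α}

theorem exists_lt_measure_image_inter_le {ι : Type*} {f : ι → α} {S : Set ι} {c : ℝ≥0∞}
    (hc : c < μ (f '' S)) (p : ι → ℕ) : ∃ k, c < μ (f '' (S ∩ {x | p x ≤ k})) := by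
  have hmono : Monotone fun k => f '' (S ∩ {x | p x ≤ k}) := fun k l hkl =>
    image_mono (inter_subset_inter_right _ fun _ hx => le_trans hx hkl)
  have hunion : ⋃ k, f '' (S ∩ {x | p x ≤ k}) = f '' S := by
    rw [← image_iUnion, ← inter_iUnion, inter_eq_left.2]
    exact fun x _ => mem_iUnion.2 ⟨p x, le_refl (p x)⟩
  rwa [← hunion, hmono.measure_iUnion, lt_iSup_iff] at hc

theorem exists_forall_lt_measure_image_pi_Iio_Iic {f : (ℕ → ℕ) → α} {c : ℝ≥0∞}
    (hc : c < μ (range f)) : ∃ n : ℕ → ℕ, ∀ m, c < μ (f '' (Iio m).pi fun i => Iic (n i)) := by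
  choose! k hk using fun (S : Set (ℕ → ℕ)) (m : ℕ) (hS : c < μ (f '' S)) =>
    exists_lt_measure_image_inter_le hS (fun x => x m)
  let S : ℕ → Set (ℕ → ℕ) := fun m => m.rec univ fun m S => S ∩ {x | x m ≤ k S m}
  have hS : ∀ m, c < μ (f '' S m) := fun m => by
    induction m with
    | zero => simpa [S] using hc
    | succ m ih => exact hk _ m ih
  have hS_eq : ∀ m, S m = (Iio m).pi fun i => Iic (k (S i) i) := fun m => by
    induction m with
    | zero => simp [S]
    | succ m ih =>
      change S m ∩ {x | x m ≤ k (S m) m} = _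
      have hIio : Iio (m + 1) = insert m (Iio m) := Order.Iio_succ_eq_insert m
      rw [hIio, insert_pi, ← ih, inter_comm]
      rfl
  exact ⟨fun i => k (S i) i, fun m => hS_eq m ▸ hS m⟩

variable [TopologicalSpace α]

theorem exists_isCompact_lt_measure_of_analyticSet [μ.OuterRegular] {s : Set α}
    (hs : AnalyticSet s) {c : ℝ≥0∞} (hc : c < μ s) : ∃ K ⊆ s, IsCompact K ∧ c < μ K := by
  rw [AnalyticSet] at hs
  obtain rfl | ⟨f, hf, rfl⟩ := hs
  · simp at hc
  obtain ⟨d, hcd, hd⟩ := exists_between hc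
  obtain ⟨n, hn⟩ := exists_forall_lt_measure_image_pi_Iio_Iic hd
  refine ⟨f '' Iic n, image_subset_range _ _, (isCompact_Iic_pi_nat n).image hf, hcd.trans_le ?_⟩
  -- An open set around the image of `Iic n` contains the image of a box bounded by `n` in only
  -- finitely many coordinates, and all such images have measure greater than `d`.
  by_contra! hlt
  obtain ⟨U, hfU, hU, hUd⟩ := exists_isOpen_lt_of_lt _ _ hlt
  obtain ⟨m, hm⟩ := exists_pi_Iio_Iic_subset_of_isOpen (hU.preimage hf) (image_subset_iff.1 hfU)
  exact ((hn m).trans_le (measure_mono (image_subset_iff.2 hm))).not_gt hUd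

theorem nullMeasurableSet_of_analyticSet_of_measure_ne_top [T2Space α] [OpensMeasurableSpace α]
    [μ.OuterRegular] {s : Set α} (hs : AnalyticSet s) (hμs : μ s ≠ ∞) :
    NullMeasurableSet s μ := by
  obtain hzero | hpos := eq_zero_or_pos (a := μ s)
  · exact .of_null hzero
  obtain ⟨u, -, hu, hu_lim⟩ := exists_seq_strictMono_tendsto' hpos
  choose K hKs hK hKu using
    fun n => exists_isCompact_lt_measure_of_analyticSet hs (hu n).2
  have hmeas : NullMeasurableSet (⋃ n, K n) μ :=
    .iUnion fun n => (hK n).measurableSet.nullMeasurableSet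
  have hle : μ s ≤ μ (⋃ n, K n) := le_of_tendsto' hu_lim fun n =>
    (hKu n).le.trans (measure_mono (subset_iUnion K n))
  exact hmeas.congr (ae_eq_of_subset_of_measure_ge (iUnion_subset hKs) hle hmeas hμs)

theorem nullMeasurableSet_of_analyticSet [TopologicalSpace.MetrizableSpace α] [BorelSpace α]
    [SFinite μ] {s : Set α} (hs : AnalyticSet s) : NullMeasurableSet s μ :=
  (nullMeasurableSet_of_analyticSet_of_measure_ne_top hs (measure_ne_top μ.toFinite s)).mono_ac
    (absolutelyContinuous_toFinite μ)

theorem analyticSet_setOf_lt_of_measurable {α β : Type*} [TopologicalSpace α] [PolishSpace α]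
    [MeasurableSpace α] [BorelSpace α] [TopologicalSpace β] [LinearOrder β] [OrderClosedTopology β]
    [MeasurableSpace β] [OpensMeasurableSpace β] {f : α → β} (hf : Measurable f) (b : β) :
    AnalyticSet {x | b < f x} :=
  (hf measurableSet_Ioi).analyticSet

end AnalyticSet

section LevelSets

variable {α β : Type*} [MeasurableSpace α]

theorem aemeasurable_of_nullMeasurableSet_setOf_lt [TopologicalSpace β] [LinearOrder β]
    [OrderTopology β] [SecondCountableTopology β] [MeasurableSpace β] [BorelSpace β]
    {μ : Measure α} {u : α → β}
    (hu : ∀ b, NullMeasurableSet {x | b < u x} μ) : AEMeasurable u μ :=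
  NullMeasurable.aemeasurable fun _ hs =>
    measurable_of_Ioi (δ := NullMeasurableSpace α μ) hu hs

theorem measure_setOf_lt_le_of_forall_gt [TopologicalSpace β] [LinearOrder β] [OrderTopology β]
    [DenselyOrdered β] [FirstCountableTopology β] {μ : Measure α} {u : α → β} {b : β} {C : ℝ≥0∞}
    (h : ∀ b' > b, μ {x | b' < u x} ≤ C) : μ {x | b < u x} ≤ C := by
  by_cases hb : ∃ b', b < b'
  · obtain ⟨b₀, hb₀⟩ := hb
    obtain ⟨v, hv, hv_gt, hv_lim⟩ := exists_seq_strictAnti_tendsto' hb₀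
    have hunion : {x | b < u x} = ⋃ n, {x | v n < u x} := by
      ext x
      simp only [mem_ofPred_eq, mem_iUnion]
      exact ⟨fun hx => (hv_lim.eventually_lt_const hx).exists,
        fun ⟨n, hn⟩ => (hv_gt n).1.trans hn⟩
    have hmono : Monotone fun n => {x | v n < u x} :=
      fun _ _ hmn _ hx => (hv.antitone hmn).trans_lt hx
    rw [hunion, hmono.measure_iUnion]
    exact iSup_le fun n => h _ (hv_gt n).1
  · have hempty : {x | b < u x} = ∅ := eq_empty_of_forall_notMem fun x hx => hb ⟨u x, hx⟩
    simp [hempty]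

theorem eq_Ioi_sInf_of_isUpperSet_of_isOpen [CompleteLinearOrder β] [DenselyOrdered β]
    [TopologicalSpace β] [OrderTopology β] {U : Set β} (hU_upper : IsUpperSet U) (hU : IsOpen U)
    (hbot : ⊥ ∉ U) : U = Ioi (sInf U) := by
  refine Subset.antisymm (fun x hx => ?_) fun x hx => ?_
  · have : (𝓝[<] x).NeBot :=
      nhdsLT_neBot_of_exists_lt ⟨⊥, bot_lt_iff_ne_bot.2 (ne_of_mem_of_not_mem hx hbot)⟩
    have hmem : ∀ᶠ y in 𝓝[<] x, y ∈ U := nhdsWithin_le_nhds (hU.mem_nhds hx)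
    obtain ⟨y, hyU, hyx⟩ := (hmem.and self_mem_nhdsWithin).exists
    exact (sInf_le hyU).trans_lt hyx
  · obtain ⟨y, hyU, hyx⟩ := sInf_lt_iff.1 hx
    exact hU_upper hyx.le hyU

theorem lowerSemicontinuous_of_monotone_of_continuousWithinAt_Iio {α : Type*}
    [TopologicalSpace α] [LinearOrder α] [TopologicalSpace β] [LinearOrder β] [OrderTopology β]
    {φ : α → β} (hφ : Monotone φ) (hφ_left : ∀ x, ContinuousWithinAt φ (Iio x) x) :
    LowerSemicontinuous φ := by
  intro x y hy
  rw [← nhdsLT_sup_nhdsGE, eventually_sup]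
  exact ⟨(hφ_left x).eventually_const_lt hy,
    eventually_nhdsWithin_of_forall fun z hz => hy.trans_le (hφ hz)⟩

end LevelSets

section LayerCake

variable {α β : Type*} [MeasurableSpace α] [MeasurableSpace β] {μ : Measure α} {ν : Measure β}

theorem lintegral_eq_lintegral_measure_ofReal_lt {u : α → ℝ≥0∞} (hu : AEMeasurable u μ) :
    ∫⁻ x, u x ∂μ = ∫⁻ t in Ioi (0 : ℝ), μ {x | ENNReal.ofReal t < u x} := by
  by_cases htop : ∀ᵐ x ∂μ, u x ≠ ∞
  · calc ∫⁻ x, u x ∂μ = ∫⁻ x, ENNReal.ofReal (u x).toReal ∂μ :=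
          lintegral_congr_ae (htop.mono fun x hx => (ENNReal.ofReal_toReal hx).symm)
      _ = ∫⁻ t in Ioi (0 : ℝ), μ {x | t < (u x).toReal} :=
          lintegral_eq_lintegral_meas_lt μ (ae_of_all _ fun _ => ENNReal.toReal_nonneg)
            hu.ennreal_toReal
      _ = ∫⁻ t in Ioi (0 : ℝ), μ {x | ENNReal.ofReal t < u x} := by
          refine setLIntegral_congr_fun measurableSet_Ioi fun t ht => measure_congr ?_
          filter_upwards [htop] with x hx
          exact propext (ENNReal.ofReal_lt_iff_lt_toReal (le_of_lt ht) hx).symm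
  · have hpos : μ {x | u x = ∞} ≠ 0 := by simpa [ae_iff] using htop
    have hle : ∫⁻ _ in Ioi (0 : ℝ), μ {x | u x = ∞} ≤
        ∫⁻ t in Ioi (0 : ℝ), μ {x | ENNReal.ofReal t < u x} :=
      lintegral_mono fun t => measure_mono fun x hx => ENNReal.ofReal_lt_top.trans_eq hx.symm
    rw [lintegral_eq_top_of_measure_eq_top_ne_zero hu hpos, eq_comm, eq_top_iff]
    simpa [ENNReal.mul_top hpos] using hle

theorem lintegral_le_lintegral_measure_ofReal_lt (u : α → ℝ≥0∞) :
    ∫⁻ x, u x ∂μ ≤ ∫⁻ t in Ioi (0 : ℝ), μ {x | ENNReal.ofReal t < u x} := by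
  obtain ⟨v, hv, hvu, heq⟩ := exists_measurable_le_lintegral_eq μ u
  rw [heq, lintegral_eq_lintegral_measure_ofReal_lt hv.aemeasurable]
  exact lintegral_mono fun t => measure_mono fun x hx => hx.trans_le (hvu x)

theorem lintegral_comp_le_of_measure_setOf_lt_le {u : α → ℝ≥0∞} {v : β → ℝ≥0∞}
    (hv : AEMeasurable v ν) (huv : ∀ ξ, μ {x | ξ < u x} ≤ ν {y | ξ < v y})
    {ψ : ℝ≥0∞ → ℝ≥0∞} (hψ : Monotone ψ) (hψ_lsc : LowerSemicontinuous ψ) (hψ_zero : ψ 0 = 0) :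
    ∫⁻ x, ψ (u x) ∂μ ≤ ∫⁻ y, ψ (v y) ∂ν := by
  refine (lintegral_le_lintegral_measure_ofReal_lt _).trans ?_
  rw [lintegral_eq_lintegral_measure_ofReal_lt
    (show AEMeasurable (fun y => ψ (v y)) ν from hψ.measurable.comp_aemeasurable hv)]
  refine lintegral_mono fun t => ?_
  have hlevel : ψ ⁻¹' Ioi (ENNReal.ofReal t) = Ioi (sInf (ψ ⁻¹' Ioi (ENNReal.ofReal t))) :=
    eq_Ioi_sInf_of_isUpperSet_of_isOpen ((isUpperSet_Ioi _).preimage hψ)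
      (hψ_lsc.isOpen_preimage _) (by simp [hψ_zero])
  change μ (u ⁻¹' (ψ ⁻¹' Ioi _)) ≤ ν (v ⁻¹' (ψ ⁻¹' Ioi _))
  rw [hlevel]
  exact huv _

end LayerCake

section EnclosingRadius

variable {E : Type*} [NormedAddCommGroup E] [NormedSpace ℝ E] [FiniteDimensional ℝ E]
  [Nontrivial E] [MeasurableSpace E] [BorelSpace E] (μ : Measure E) [μ.IsAddHaarMeasure]

theorem addHaar_eball (x : E) (r : ℝ≥0∞) :
    μ (eball x r) = r ^ Module.finrank ℝ E * μ (ball 0 1) := by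
  obtain rfl | hr := eq_or_ne r ∞
  · simp [ENNReal.top_mul (measure_ball_pos μ (0 : E) one_pos).ne',
      ENNReal.top_pow (Module.finrank_pos (R := ℝ) (M := E)).ne']
  · lift r to ℝ≥0 using hr
    rw [eball_coe, Measure.addHaar_ball _ _ r.coe_nonneg, ENNReal.ofReal_pow r.coe_nonneg,
      ENNReal.ofReal_coe_nnreal]

theorem addHaar_closedEBall (x : E) (r : ℝ≥0∞) : μ (closedEBall x r) = μ (eball x r) := by
  obtain rfl | hr := eq_or_ne r ∞
  · simp
  · lift r to ℝ≥0 using hr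
    rw [eball_coe, closedEBall_coe, Measure.addHaar_closedBall_eq_addHaar_ball]

theorem ennreal_add_pow_le (a b : ℝ≥0∞) (n : ℕ) : (a + b) ^ n ≤ 2 ^ (n - 1) * (a ^ n + b ^ n) := by
  obtain rfl | hn := eq_or_ne n 0
  · simp
  obtain rfl | ha := eq_or_ne a ∞
  · simp [hn]
  obtain rfl | hb := eq_or_ne b ∞
  · simp [hn]
  lift a to ℝ≥0 using ha
  lift b to ℝ≥0 using hb
  exact_mod_cast add_pow_le (zero_le (a := a)) (zero_le (a := b)) n

theorem addHaar_eball_add_le (r s : ℝ≥0∞) :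
    μ (eball (0 : E) (r + s)) ≤
      2 ^ (Module.finrank ℝ E - 1) * (μ (eball (0 : E) r) + μ (eball (0 : E) s)) := by
  simp only [addHaar_eball, ← add_mul, ← mul_assoc]
  gcongr
  exact ennreal_add_pow_le r s _

theorem encRadius_mono {X Y : Set (ES N)} (hXY : X ⊆ Y) : encRadius X ≤ encRadius Y :=
  sInf_le_sInf fun _ ⟨c, hc⟩ => ⟨c, fun x hx => hc x (hXY hx)⟩

theorem encRadius_add_le (X Y : Set (ES N)) : encRadius (X + Y) ≤ encRadius X + encRadius Y := by
  unfold encRadius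
  simp only [ENNReal.sInf_add, ENNReal.add_sInf]
  refine le_iInf₂ fun s ⟨d, hd⟩ => le_iInf₂ fun r ⟨c, hc⟩ => sInf_le ⟨c + d, ?_⟩
  rintro _ ⟨x, hx, y, hy, rfl⟩
  exact (edist_add_add_le x y c d).trans (add_le_add (hc x hx) (hd y hy))

variable [NeZero N]

theorem volume_le_volume_eball_encRadius (X : Set (ES N)) :
    volume X ≤ volume (eball (0 : ES N) (encRadius X)) := by
  have hcont : Continuous fun r : ℝ≥0∞ => volume (eball (0 : ES N) r) := by
    simp only [addHaar_eball]
    exact (ENNReal.continuous_mul_const measure_ball_lt_top.ne).comp (ENNReal.continuous_pow _)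
  have hmono : Monotone fun r : ℝ≥0∞ => volume (eball (0 : ES N) r) :=
    fun _ _ hrs => measure_mono (eball_subset_eball hrs)
  have htop : volume (eball (0 : ES N) ∞) = ∞ := by simp
  unfold encRadius
  rw [hmono.map_sInf_of_continuousAt hcont.continuousAt htop]
  refine le_sInf ?_
  rintro _ ⟨r, ⟨c, hc⟩, rfl⟩
  calc volume X ≤ volume (closedEBall c r) := measure_mono hc
    _ = volume (eball (0 : ES N) r) := by
      rw [addHaar_closedEBall, addHaar_eball, addHaar_eball]

theorem volume_add_le (X Y : Set (ES N)) : volume (X + Y) ≤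
    2 ^ (N - 1) * (volume (eball (0 : ES N) (encRadius X)) +
      volume (eball (0 : ES N) (encRadius Y))) :=
  calc volume (X + Y) ≤ volume (eball (0 : ES N) (encRadius (X + Y))) :=
        volume_le_volume_eball_encRadius _
    _ ≤ volume (eball (0 : ES N) (encRadius X + encRadius Y)) :=
        measure_mono (eball_subset_eball (encRadius_add_le X Y))
    _ ≤ _ := by
      simpa only [finrank_euclideanSpace_fin] using addHaar_eball_add_le (volume : Measure (ES N))
        (encRadius X) (encRadius Y)

end EnclosingRadius

section Transform

theorem setOf_lt_supMin (f g : ES N → ℝ≥0∞) (ξ : ℝ≥0∞) :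
    {x | ξ < supMin f g x} = {x | ξ < f x} + {x | ξ < g x} := by
  ext x
  simp only [supMin, lt_iSup_iff, lt_min_iff, mem_ofPred_eq, Set.mem_add]
  constructor
  · rintro ⟨y, hf, hg⟩
    exact ⟨x - y, hf, y, hg, sub_add_cancel x y⟩
  · rintro ⟨z, hz, y, hy, rfl⟩
    exact ⟨y, by rwa [add_sub_cancel_right], hy⟩

theorem measurable_hatT (f : ES N → ℝ≥0∞) : Measurable (hatT f) := by
  have hanti : Antitone fun t : ℝ≥0∞ => sInf {ξ : ℝ≥0∞ | encRadius {y | ξ < f y} ≤ t} :=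
    fun _ _ hst => sInf_le_sInf fun _ hξ => le_trans hξ hst
  exact hanti.measurable.comp measurable_enorm

theorem eball_encRadius_subset_setOf_le_hatT (f : ES N → ℝ≥0∞) (ξ : ℝ≥0∞) :
    eball 0 (encRadius {y | ξ < f y}) ⊆ {x | ξ ≤ hatT f x} := by
  intro x hx
  rw [mem_eball, edist_zero_right] at hx
  change ξ ≤ sInf _
  refine le_sInf fun η hη => ?_
  by_contra! hlt
  exact (hx.trans_le (encRadius_mono fun y hy => hlt.trans hy)).not_ge hη

theorem aemeasurable_supMin {μ : Measure (ES N)} [SFinite μ] {f g : ES N → ℝ≥0∞}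
    (hf : ∀ ξ, AnalyticSet {x | ξ < f x}) (hg : ∀ ξ, AnalyticSet {x | ξ < g x}) :
    AEMeasurable (supMin f g) μ := by
  refine aemeasurable_of_nullMeasurableSet_setOf_lt fun ξ => ?_
  rw [setOf_lt_supMin]
  exact nullMeasurableSet_of_analyticSet (analyticSet_add (hf ξ) (hg ξ))

variable [NeZero N]

theorem volume_setOf_lt_supMin_le (f g : ES N → ℝ≥0∞) (ξ : ℝ≥0∞) :
    volume {x | ξ < supMin f g x} ≤
      2 ^ (N - 1) * (volume {x | ξ < hatT f x} + volume {x | ξ < hatT g x}) := by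
  refine measure_setOf_lt_le_of_forall_gt fun ζ hζ => ?_
  have hball : ∀ h : ES N → ℝ≥0∞,
      volume (eball (0 : ES N) (encRadius {x | ζ < h x})) ≤ volume {x | ξ < hatT h x} := fun h =>
    measure_mono fun x hx => hζ.trans_le (eball_encRadius_subset_setOf_le_hatT h ζ hx)
  calc volume {x | ζ < supMin f g x}
      = volume ({x | ζ < f x} + {x | ζ < g x}) := by rw [setOf_lt_supMin]
    _ ≤ 2 ^ (N - 1) * (volume (eball (0 : ES N) (encRadius {x | ζ < f x})) +
          volume (eball (0 : ES N) (encRadius {x | ζ < g x}))) := volume_add_le _ _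
    _ ≤ _ := mul_le_mul_right (add_le_add (hball f) (hball g)) _

theorem lintegral_comp_supMin_le (f g : ES N → ℝ≥0∞) {ψ : ℝ≥0∞ → ℝ≥0∞} (hψ : Monotone ψ)
    (hψ_lsc : LowerSemicontinuous ψ) (hψ_zero : ψ 0 = 0) :
    ∫⁻ x, ψ (supMin f g x) ≤
      2 ^ (N - 1) * ((∫⁻ x, ψ (hatT f x)) + ∫⁻ x, ψ (hatT g x)) := by
  -- `ν` is chosen so that the level sets of the identity of `[0, ∞]` have as `ν`-measure the
  -- right-hand side of the level set estimate.
  let ν : Measure ℝ≥0∞ :=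
    (2 : ℝ≥0∞) ^ (N - 1) • (volume.map (hatT f) + volume.map (hatT g))
  have hmap (h : ES N → ℝ≥0∞) (ξ : ℝ≥0∞) :
      volume.map (hatT h) {t | ξ < t} = volume {x | ξ < hatT h x} :=
    Measure.map_apply (measurable_hatT h) measurableSet_Ioi
  have hlevel : ∀ ξ, volume {x | ξ < supMin f g x} ≤ ν {t | ξ < t} := fun ξ => by
    simp only [ν, Measure.smul_apply, Measure.add_apply, smul_eq_mul]
    rw [hmap f, hmap g]
    exact volume_setOf_lt_supMin_le f g ξ
  calc ∫⁻ x, ψ (supMin f g x) ≤ ∫⁻ t, ψ t ∂ν :=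
        lintegral_comp_le_of_measure_setOf_lt_le aemeasurable_id hlevel hψ hψ_lsc hψ_zero
    _ = _ := by
        rw [lintegral_smul_measure, lintegral_add_measure,
          lintegral_map hψ.measurable (measurable_hatT f),
          lintegral_map hψ.measurable (measurable_hatT g), smul_eq_mul]

end Transform

section Luxemburg

variable {φ : ℝ≥0∞ → ℝ≥0∞}

theorem lintegral_comp_inv_mul_le {α : Type*} [MeasurableSpace α] {μ : Measure α}
    (hφ_star : ∀ a ≤ 1, ∀ x, φ (a * x) ≤ a * φ x) {q R : ℝ≥0∞} (hq : q ≠ 0) (hq_top : q ≠ ∞)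
    (hqR : q ≤ R) (h : α → ℝ≥0∞) :
    ∫⁻ x, φ (R⁻¹ * h x) ∂μ ≤ q / R * ∫⁻ x, φ (q⁻¹ * h x) ∂μ := by
  have hratio : q / R ≤ 1 := ENNReal.div_le_of_le_mul (by rwa [one_mul])
  have hinv : R⁻¹ = q / R * q⁻¹ := by
    rw [div_eq_mul_inv, mul_right_comm, ENNReal.mul_inv_cancel hq hq_top, one_mul]
  rw [← lintegral_const_mul' _ _ (hratio.trans_lt ENNReal.one_lt_top).ne]
  refine lintegral_mono fun x => ?_
  rw [hinv, mul_assoc]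
  exact hφ_star _ hratio _

theorem luxNorm_le_mul_add_of_lintegral_le (hφ_star : ∀ a ≤ 1, ∀ x, φ (a * x) ≤ a * φ x)
    {u v w : ES N → ℝ≥0∞} {C : ℝ≥0∞} (hC : 1 ≤ C) (hC_top : C ≠ ∞)
    (huvw : ∀ c ≠ ∞, ∫⁻ x, φ (c * u x) ≤
      C * ((∫⁻ x, φ (c * v x)) + ∫⁻ x, φ (c * w x))) :
    luxNorm φ u ≤ C * (luxNorm φ v + luxNorm φ w) := by
  have hC_zero : C ≠ 0 := (one_pos.trans_le hC).ne'
  rw [← ENNReal.div_le_iff' hC_zero hC_top]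
  unfold luxNorm
  rw [ENNReal.sInf_add]
  refine le_iInf₂ fun r ⟨hr, hvr⟩ => ?_
  rw [ENNReal.add_sInf]
  refine le_iInf₂ fun s ⟨hs, hws⟩ => (ENNReal.div_le_iff' hC_zero hC_top).2 ?_
  obtain htop | htop := eq_or_ne (r + s) ∞
  · simp [htop, hC_zero]
  obtain ⟨hr_top, hs_top⟩ := ENNReal.add_ne_top.1 htop
  set R := C * (r + s)
  have hle : r + s ≤ R := le_mul_of_one_le_left' hC
  have hR_pos : 0 < R := (hr.trans_le le_self_add).trans_le hle
  refine sInf_le ⟨hR_pos, ?_⟩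
  calc ∫⁻ x, φ (R⁻¹ * u x)
      ≤ C * ((∫⁻ x, φ (R⁻¹ * v x)) + ∫⁻ x, φ (R⁻¹ * w x)) :=
        huvw _ (ENNReal.inv_ne_top.2 hR_pos.ne')
    _ ≤ C * (r / R * 1 + s / R * 1) := by
        gcongr
        · exact (lintegral_comp_inv_mul_le hφ_star hr.ne' hr_top
            (le_self_add.trans hle) v).trans (by gcongr)
        · exact (lintegral_comp_inv_mul_le hφ_star hs.ne' hs_top
            (le_add_self.trans hle) w).trans (by gcongr)
    _ = R / R := by rw [mul_one, mul_one, ← ENNReal.add_div, ← mul_div_assoc]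
    _ ≤ 1 := ENNReal.div_self_le_one

end Luxemburg

theorem IsYoungFunction.map_mul_le {φ : ℝ≥0∞ → ℝ≥0∞} (hφ : IsYoungFunction φ) {a : ℝ≥0∞}
    (ha : a ≤ 1) (x : ℝ≥0∞) : φ (a * x) ≤ a * φ x := by
  simpa [hφ.map_zero] using hφ.convex (x := x) (y := 0) (add_tsub_cancel_of_le ha)

theorem IsYoungFunction.lowerSemicontinuous {φ : ℝ≥0∞ → ℝ≥0∞} (hφ : IsYoungFunction φ) :
    LowerSemicontinuous φ :=
  lowerSemicontinuous_of_monotone_of_continuousWithinAt_Iio hφ.mono hφ.left_continuous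

theorem luxNorm_supMin_le_general {N : ℕ} (hN : 0 < N) {f g : ES N → ℝ≥0∞}
    (hf : ∀ ξ, AnalyticSet {x | ξ < f x}) (hg : ∀ ξ, AnalyticSet {x | ξ < g x})
    {φ : ℝ≥0∞ → ℝ≥0∞} (hφ : Monotone φ) (hφ_lsc : LowerSemicontinuous φ)
    (hφ_star : ∀ a ≤ 1, ∀ x, φ (a * x) ≤ a * φ x) :
    AEMeasurable (supMin f g) (volume : Measure (ES N)) ∧
      luxNorm φ (supMin f g) ≤ 2 ^ (N - 1) * (luxNorm φ (hatT f) + luxNorm φ (hatT g)) := by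
  have : NeZero N := ⟨hN.ne'⟩
  have hφ_zero : φ 0 = 0 := by simpa using hφ_star 0 zero_le_one 0
  refine ⟨aemeasurable_supMin hf hg, luxNorm_le_mul_add_of_lintegral_le hφ_star
    (one_le_pow₀ one_le_two) (ENNReal.pow_ne_top ENNReal.ofNat_ne_top) fun c hc => ?_⟩
  exact lintegral_comp_supMin_le f g (ψ := fun t => φ (c * t)) (fun s t hst => hφ (by gcongr))
    (hφ_lsc.comp (ENNReal.continuous_const_mul hc)) (by simpa using hφ_zero)

theorem luxNorm_supMin_le {N : ℕ} (hN : 0 < N)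
    (f g : ES N → ℝ≥0∞) (hf : Measurable f) (hg : Measurable g)
    (φ : ℝ≥0∞ → ℝ≥0∞) (hφ : IsYoungFunction φ) :
    AEMeasurable (supMin f g) (volume : Measure (ES N)) ∧
      luxNorm φ (supMin f g) ≤ 2 ^ (N - 1) * (luxNorm φ (hatT f) + luxNorm φ (hatT g)) := by
  exact luxNorm_supMin_le_general hN (analyticSet_setOf_lt_of_measurable hf)
    (analyticSet_setOf_lt_of_measurable hg) hφ.mono hφ.lowerSemicontinuous fun _ => hφ.map_mul_le

end
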